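/- Let U ⊆ ℂⁿ be a nonempty bounded open set and let Γ ⊆ closure(U) be a closed set with the norming (Shilov) property: for every function g : ℂⁿ → ℂ that is continuous on closure(U) and holomorphic on U, one has sup_{z ∈ closure(U)} |g(z)| = sup_{z ∈ Γ} |g(z)|. Let V be an open neighborhood of closure(U) and let g_{ij} : V → ℂ (1 ≤ i, j ≤ n) be holomorphic functions such that the matrix (g_{ij}(z)) is invertible for every z ∈ Γ. Then there exists a constant C > 0 such that for every open set W with closure(U) ⊆ W ⊆ V and every holomorphic function f : W → ℂ, one has Σ_{i=1}^n sup_{z ∈ U} |∂f/∂z_i(z)| ≤ C · Σ_{j=1}^n sup_{z ∈ U} | Σ_{i=1}^n g_{ji}(z) ∂f/∂z_i(z) |. -/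

import Mathlib

/-!
Directional derivatives of a holomorphic function are locally uniform limits of difference
quotients, by the second-order Schwarz lemma, so they are again holomorphic. Each of them is
therefore bounded on `U` by its supremum over `Γ`. On the compact set `Γ` the vector fields
`Z j = ∑ i, g j i ∂/∂z i` span the tangent space, so the positive continuous function
`(z, L) ↦ ∑ j, |L (Z j z)|` is bounded away from zero on the product of `Γ` with the unit sphere of
the dual space; hence `‖L‖ ≤ C * ∑ j, |L (Z j z)|`, to be applied with `L` the differential of `f`.
-/

open Filter Metric Set Topology

section Holomorphic

variable {E F : Type*} [NormedAddCommGroup E] [NormedSpace ℂ E]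
  [NormedAddCommGroup F] [NormedSpace ℂ F]

lemma norm_sub_sub_fderiv_le_of_mapsTo_ball {f : E → F} {c z : E} {R₁ R₂ : ℝ}
    (hd : DifferentiableOn ℂ f (ball c R₁)) (hmaps : MapsTo f (ball c R₁) (closedBall (f c) R₂))
    (hz : z ∈ ball c R₁) :
    ‖f z - f c - fderiv ℂ f c (z - c)‖ ≤ 2 * R₂ * (‖z - c‖ / R₁) ^ 2 := by
  have hR₁ : 0 < R₁ := pos_of_mem_ball hz
  set g : E → F := fun w ↦ f w - fderiv ℂ f c (w - c)
  have hgc (w : E) : g w - g c = f w - f c - fderiv ℂ f c (w - c) := by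
    simp only [g, sub_self, map_zero, sub_zero, sub_right_comm]
  have hgd : DifferentiableOn ℂ g (ball c R₁) := hd.sub (by fun_prop)
  have hgmaps : MapsTo g (ball c R₁) (closedBall (g c) (2 * R₂)) := fun w hw ↦ by
    have hL : ‖fderiv ℂ f c (w - c)‖ ≤ R₂ / R₁ * R₁ :=
      (fderiv ℂ f c).le_of_opNorm_le_of_le
        (Complex.norm_fderiv_le_div_of_mapsTo_ball hd hmaps hR₁) (mem_ball_iff_norm.1 hw).le
    rw [div_mul_cancel₀ _ hR₁.ne'] at hL
    rw [mem_closedBall_iff_norm, hgc, two_mul]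
    exact norm_sub_le_of_le (mem_closedBall_iff_norm.1 (hmaps hw)) hL
  have hgo : (g · - g c) =o[𝓝 c] fun w ↦ ‖w - c‖ ^ 1 := by
    simpa only [hgc, pow_one] using
      (hd.differentiableAt (ball_mem_nhds c hR₁)).hasFDerivAt.isLittleO.norm_right
  simpa only [dist_eq_norm, hgc] using
    Complex.dist_le_mul_div_pow_of_mapsTo_ball_of_isLittleO hgd hgmaps hgo hz

lemma eventually_norm_smul_lt (v : E) {δ : ℝ} (hδ : 0 < δ) : ∀ᶠ t : ℂ in 𝓝[≠] 0, ‖t • v‖ < δ :=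
  nhdsWithin_le_nhds ((Continuous.tendsto' (by fun_prop) _ _ (by simp)).eventually_lt_const hδ)

lemma tendstoUniformlyOn_inv_smul_sub_fderiv_apply {f : E → F} {s : Set E} {δ M : ℝ} (hδ : 0 < δ)
    (hd : DifferentiableOn ℂ f (thickening δ s))
    (hmaps : ∀ z ∈ s, MapsTo f (ball z δ) (closedBall (f z) M)) (v : E) :
    TendstoUniformlyOn (fun (t : ℂ) z ↦ t⁻¹ • (f (z + t • v) - f z)) (fun z ↦ fderiv ℂ f z v)
      (𝓝[≠] 0) s := by
  have hbound : Tendsto (fun t : ℂ ↦ 2 * M * (‖v‖ / δ) ^ 2 * ‖t‖) (𝓝[≠] 0) (𝓝 0) :=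
    tendsto_nhdsWithin_of_tendsto_nhds (Continuous.tendsto' (by fun_prop) _ _ (by simp))
  rw [Metric.tendstoUniformlyOn_iff]
  intro ε hε
  filter_upwards [hbound.eventually_lt_const hε, eventually_norm_smul_lt v hδ, self_mem_nhdsWithin]
    with t htε htδ ht z hz
  have ht : t ≠ 0 := ht
  have hrem := norm_sub_sub_fderiv_le_of_mapsTo_ball (hd.mono (ball_subset_thickening hz δ))
    (hmaps z hz) (z := z + t • v) (by simpa using htδ)
  rw [add_sub_cancel_left] at hrem
  calc dist (fderiv ℂ f z v) (t⁻¹ • (f (z + t • v) - f z))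
    _ = ‖t‖⁻¹ * ‖f (z + t • v) - f z - fderiv ℂ f z (t • v)‖ := by
      rw [dist_comm, dist_eq_norm, ← norm_inv, ← norm_smul, smul_sub _ _ (fderiv ℂ f z _), map_smul,
        inv_smul_smul₀ ht]
    _ ≤ ‖t‖⁻¹ * (2 * M * (‖t • v‖ / δ) ^ 2) := by gcongr
    _ = 2 * M * (‖v‖ / δ) ^ 2 * ‖t‖ := by
      rw [norm_smul]
      field_simp [norm_ne_zero_iff.2 ht]
    _ < ε := htε

lemma uniformCauchySeqOn_fderiv {ι : Type*} {l : Filter ι} {f : ι → E → F} {s : Set E} {δ : ℝ}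
    (hδ : 0 < δ) (hd : ∀ᶠ n in l, DifferentiableOn ℂ (f n) (thickening δ s))
    (hf : UniformCauchySeqOn f l (thickening δ s)) :
    UniformCauchySeqOn (fun n ↦ fderiv ℂ (f n)) l s := by
  intro u hu
  obtain ⟨ε, hε, hεu⟩ := Metric.mem_uniformity_dist.1 hu
  filter_upwards [hd.prod_mk hd, hf _ (dist_mem_uniformity (by positivity : 0 < ε * δ / 4))]
    with ⟨m, n⟩ ⟨hm, hn⟩ hmn z hz
  have hsub : ball z δ ⊆ thickening δ s := ball_subset_thickening hz δ
  have hsmall (w) (hw : w ∈ ball z δ) : ‖(f m - f n) w‖ ≤ ε * δ / 4 := by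
    simpa only [dist_eq_norm, Pi.sub_apply] using (hmn w (hsub hw)).le
  have hmaps : MapsTo (f m - f n) (ball z δ) (closedBall ((f m - f n) z) (ε * δ / 2)) :=
    fun w hw ↦ by
      rw [mem_closedBall_iff_norm]
      linarith [norm_sub_le_of_le (hsmall w hw) (hsmall z (mem_ball_self hδ))]
  have hdiff (g : E → F) (hg : DifferentiableOn ℂ g (thickening δ s)) : DifferentiableAt ℂ g z :=
    (hg.mono hsub).differentiableAt (ball_mem_nhds z hδ)
  refine hεu ?_
  calc dist (fderiv ℂ (f m) z) (fderiv ℂ (f n) z)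
    _ = ‖fderiv ℂ (f m - f n) z‖ := by rw [dist_eq_norm, fderiv_sub (hdiff _ hm) (hdiff _ hn)]
    _ ≤ ε * δ / 2 / δ :=
      Complex.norm_fderiv_le_div_of_mapsTo_ball ((hm.mono hsub).sub (hn.mono hsub)) hmaps hδ
    _ < ε := by
      field_simp
      linarith

variable [CompleteSpace F]

theorem differentiableOn_of_tendstoUniformlyOn {ι : Type*} {l : Filter ι} [l.NeBot]
    {f : ι → E → F} {g : E → F} {U : Set E} (hU : IsOpen U)
    (hd : ∀ᶠ n in l, DifferentiableOn ℂ (f n) U) (hf : TendstoUniformlyOn f g l U) :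
    DifferentiableOn ℂ g U := by
  intro x hx
  obtain ⟨R, hR, hRU⟩ := Metric.isOpen_iff.1 hU x hx
  have hsub : thickening (R / 2) (ball x (R / 2)) ⊆ U := by
    simpa only [add_halves] using (Metric.thickening_ball x (R / 2) (R / 2)).trans (by simpa)
  have hcauchy : UniformCauchySeqOn (fun n ↦ fderiv ℂ (f n)) l (ball x (R / 2)) :=
    uniformCauchySeqOn_fderiv (half_pos hR) (hd.mono fun n hn ↦ hn.mono hsub)
      (hf.uniformCauchySeqOn.mono hsub)
  choose! g' hg' using fun y hy ↦ CompleteSpace.complete (hcauchy.cauchy_map (x := y) hy)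
  have hball : ball x (R / 2) ∈ 𝓝 x := ball_mem_nhds x (half_pos hR)
  have hlim : TendstoUniformlyOnFilter (fun n ↦ fderiv ℂ (f n)) g' l (𝓝 x) :=
    (hcauchy.tendstoUniformlyOn_of_tendsto hg').tendstoUniformlyOnFilter.mono_right
      (le_principal_iff.2 hball)
  have hderiv : ∀ᶠ p : ι × E in l ×ˢ 𝓝 x, HasFDerivAt (f p.1) (fderiv ℂ (f p.1) p.2) p.2 := by
    filter_upwards [hd.prod_mk (hU.mem_nhds hx)] with p hp
    exact (hp.1.differentiableAt (hU.mem_nhds hp.2)).hasFDerivAt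
  have hg : HasFDerivAt g (g' x) x := hasFDerivAt_of_tendstoUniformlyOnFilter hlim hderiv
    (eventually_of_mem (hU.mem_nhds hx) fun y ↦ hf.tendsto_at)
  exact hg.differentiableAt.differentiableWithinAt

theorem differentiableOn_fderiv_apply {f : E → F} {U : Set E} (hU : IsOpen U)
    (hf : DifferentiableOn ℂ f U) (v : E) : DifferentiableOn ℂ (fun z ↦ fderiv ℂ f z v) U := by
  intro z₀ hz₀
  have hcont : ∀ᶠ z in 𝓝 z₀, f z ∈ ball (f z₀) 1 :=
    (hf.continuousOn.continuousAt (hU.mem_nhds hz₀)).eventually (ball_mem_nhds _ one_pos)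
  obtain ⟨R, hR, hRU⟩ := Metric.mem_nhds_iff.1 (inter_mem (hU.mem_nhds hz₀) hcont)
  set δ := R / 2 with hδ
  have hsub : thickening δ (ball z₀ δ) ⊆ ball z₀ R := by
    simpa [hδ] using Metric.thickening_ball z₀ δ δ
  have hd : DifferentiableOn ℂ f (thickening δ (ball z₀ δ)) :=
    hf.mono fun z hz ↦ (hRU (hsub hz)).1
  have hmaps : ∀ z ∈ ball z₀ δ, MapsTo f (ball z δ) (closedBall (f z) (1 + 1)) := fun z hz w hw ↦
    (dist_triangle_right _ _ _).trans (add_le_add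
      (hRU (hsub (ball_subset_thickening hz δ hw))).2.le
      (hRU (ball_subset_ball (half_le_self hR.le) hz)).2.le)
  have hslope : ∀ᶠ t : ℂ in 𝓝[≠] 0,
      DifferentiableOn ℂ (fun z ↦ t⁻¹ • (f (z + t • v) - f z)) (ball z₀ δ) := by
    filter_upwards [eventually_norm_smul_lt v (half_pos hR)] with t ht
    have hshift : MapsTo (· + t • v) (ball z₀ δ) (thickening δ (ball z₀ δ)) := fun z hz ↦
      ball_subset_thickening hz δ (by simpa using ht)
    exact ((hd.comp (by fun_prop) hshift).sub
      (hd.mono (self_subset_thickening (half_pos hR) _))).const_smul t⁻¹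
  have hlim := differentiableOn_of_tendstoUniformlyOn isOpen_ball hslope
    (tendstoUniformlyOn_inv_smul_sub_fderiv_apply (half_pos hR) hd hmaps v)
  exact (hlim.differentiableAt (ball_mem_nhds z₀ (half_pos hR))).differentiableWithinAt

end Holomorphic

section Norming

/-- `Γ` is norming for the algebra of functions that are continuous on `closure U` and holomorphic
on `U`: these functions attain their supremum norm on `Γ`. A closed norming subset of `closure U`
is one that contains the Shilov boundary. The suprema are only meaningful when the functions are
bounded, for instance for `closure U` compact and `Γ ⊆ closure U`. -/
def IsNormingSet {E : Type*} [NormedAddCommGroup E] [NormedSpace ℂ E] (U Γ : Set E) : Prop :=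
  ∀ g : E → ℂ, ContinuousOn g (closure U) → DifferentiableOn ℂ g U →
    sSup ((fun z ↦ ‖g z‖) '' closure U) = sSup ((fun z ↦ ‖g z‖) '' Γ)

lemma IsNormingSet.norm_le {E : Type*} [NormedAddCommGroup E] [NormedSpace ℂ E] {U Γ : Set E}
    (h : IsNormingSet U Γ) (hU : IsCompact (closure U)) {g : E → ℂ}
    (hgc : ContinuousOn g (closure U)) (hgd : DifferentiableOn ℂ g U) {M : ℝ} (hM : 0 ≤ M)
    (hΓ : ∀ z ∈ Γ, ‖g z‖ ≤ M) {z : E} (hz : z ∈ closure U) : ‖g z‖ ≤ M :=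
  calc ‖g z‖
    _ ≤ sSup ((fun w ↦ ‖g w‖) '' closure U) :=
      le_csSup (hU.bddAbove_image hgc.norm) (mem_image_of_mem _ hz)
    _ = sSup ((fun w ↦ ‖g w‖) '' Γ) := h g hgc hgd
    _ ≤ M := Real.sSup_le (forall_mem_image.2 hΓ) hM

lemma norm_le_iSup_of_mem_closure {X F : Type*} [TopologicalSpace X] [SeminormedAddCommGroup F]
    {U : Set X} {g : X → F} (hU : IsCompact (closure U)) (hg : ContinuousOn g (closure U))
    {z : X} (hz : z ∈ closure U) : ‖g z‖ ≤ ⨆ w : U, ‖g w‖ := by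
  have hbdd : BddAbove (range fun w : U ↦ ‖g w‖) := by
    refine (hU.bddAbove_image hg.norm).mono (range_subset_iff.2 fun w ↦ ?_)
    exact mem_image_of_mem _ (subset_closure w.2)
  exact le_on_closure (fun w hw ↦ le_ciSup hbdd ⟨w, hw⟩) hg.norm continuousOn_const hz

end Norming

section Frames

lemma exists_opNorm_le_mul_sum_norm_apply {𝕜 X E κ : Type*} (F : Type*) [RCLike 𝕜]
    [TopologicalSpace X]
    [NormedAddCommGroup E] [NormedSpace 𝕜 E] [FiniteDimensional 𝕜 E]
    [NormedAddCommGroup F] [NormedSpace 𝕜 F] [FiniteDimensional 𝕜 F] [Fintype κ]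
    {K : Set X} (hK : IsCompact K) {Z : κ → X → E} (hZ : ∀ j, ContinuousOn (Z j) K)
    (hspan : ∀ x ∈ K, Submodule.span 𝕜 (range fun j ↦ Z j x) = ⊤) :
    ∃ C > 0, ∀ x ∈ K, ∀ L : E →L[𝕜] F, ‖L‖ ≤ C * ∑ j, ‖L (Z j x)‖ := by
  have : ProperSpace (E →L[𝕜] F) := FiniteDimensional.proper_rclike 𝕜 _
  have hcont : ContinuousOn (fun p : X × (E →L[𝕜] F) ↦ ∑ j, ‖p.2 (Z j p.1)‖)
      (K ×ˢ sphere 0 1) := by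
    refine continuousOn_finsetSum _ fun j _ ↦ ContinuousOn.norm ?_
    exact continuousOn_snd.clm_apply ((hZ j).comp continuousOn_fst fun p hp ↦ hp.1)
  have hpos : ∀ p ∈ K ×ˢ sphere (0 : E →L[𝕜] F) 1, 0 < ∑ j, ‖p.2 (Z j p.1)‖ := by
    rintro ⟨x, L⟩ ⟨hx, hL⟩
    refine (Finset.sum_nonneg fun _ _ ↦ norm_nonneg _).lt_of_ne' fun hzero ↦ ?_
    rw [Finset.sum_eq_zero_iff_of_nonneg fun _ _ ↦ norm_nonneg _] at hzero
    have hL0 : L = 0 := ContinuousLinearMap.coe_injective <|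
      LinearMap.ext_on_range (hspan x hx) fun j ↦ norm_eq_zero.1 (hzero j (Finset.mem_univ j))
    simp [hL0] at hL
  obtain ⟨δ, hδ, hmin⟩ := (hK.prod (isCompact_sphere _ _)).exists_forall_le' hcont hpos
  refine ⟨δ⁻¹, inv_pos.2 hδ, fun x hx L ↦ ?_⟩
  rcases eq_or_ne L 0 with rfl | hL
  · simp
  have hunit : ((‖L‖⁻¹ : ℝ) : 𝕜) • L ∈ sphere (0 : E →L[𝕜] F) 1 := by
    simp [norm_smul, hL]
  have hscaled : δ ≤ ‖L‖⁻¹ * ∑ j, ‖L (Z j x)‖ := by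
    simpa [norm_smul, Finset.mul_sum] using hmin (x, _) ⟨hx, hunit⟩
  rwa [le_inv_mul_iff₀ hδ, mul_comm, ← le_inv_mul_iff₀ (norm_pos_iff.2 hL)]

lemma span_range_row_eq_top_of_det_ne_zero {K ι : Type*} [Field K] [Fintype ι] [DecidableEq ι]
    {A : Matrix ι ι K} (hA : A.det ≠ 0) : Submodule.span K (range A.row) = ⊤ :=
  (Matrix.linearIndependent_rows_of_det_ne_zero hA).span_eq_top_of_card_eq_finrank' (by simp)

lemma sum_mul_apply_single_one {R ι S : Type*} [CommSemiring R] [Fintype ι] [DecidableEq ι]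
    [FunLike S (ι → R) R] [LinearMapClass S R (ι → R) R] (L : S) (w : ι → R) :
    ∑ i, w i * L (Pi.single i 1) = L w := by
  conv_rhs => rw [pi_eq_sum_univ' w]
  simp only [map_sum, map_smul, smul_eq_mul]

end Frames

section Estimate

variable {E κ : Type*} [NormedAddCommGroup E] [NormedSpace ℂ E] [FiniteDimensional ℂ E] [Fintype κ]
  {U Γ : Set E} {Z : κ → E → E}

theorem exists_norm_fderiv_le_mul_sum_iSup (hU : Bornology.IsBounded U) (hΓ : IsClosed Γ)
    (hΓU : Γ ⊆ closure U) (hnorming : IsNormingSet U Γ)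
    (hZ : ∀ j, ContinuousOn (Z j) (closure U))
    (hspan : ∀ z ∈ Γ, Submodule.span ℂ (range fun j ↦ Z j z) = ⊤) :
    ∃ C > (0 : ℝ), ∀ W : Set E, IsOpen W → closure U ⊆ W → ∀ f : E → ℂ, DifferentiableOn ℂ f W →
      ∀ z ∈ closure U, ‖fderiv ℂ f z‖ ≤ C * ∑ j, ⨆ w : U, ‖fderiv ℂ f w (Z j w)‖ := by
  have : ProperSpace E := FiniteDimensional.proper_rclike ℂ E
  have hUc : IsCompact (closure U) := hU.isCompact_closure
  obtain ⟨C, hC, hframe⟩ := exists_opNorm_le_mul_sum_norm_apply ℂ (hUc.of_isClosed_subset hΓ hΓU)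
    (fun j ↦ (hZ j).mono hΓU) hspan
  refine ⟨C, hC, fun W hW hUW f hf ↦ ?_⟩
  have hpartial (v : E) : DifferentiableOn ℂ (fun z ↦ fderiv ℂ f z v) W :=
    differentiableOn_fderiv_apply hW hf v
  have hfderiv : ContinuousOn (fderiv ℂ f) (closure U) :=
    continuousOn_clm_apply.2 fun v ↦ (hpartial v).continuousOn.mono hUW
  set S := ∑ j, ⨆ w : U, ‖fderiv ℂ f w (Z j w)‖
  have hS : 0 ≤ S := Finset.sum_nonneg fun _ _ ↦ Real.iSup_nonneg fun _ ↦ norm_nonneg _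
  have hleΓ (z) (hz : z ∈ Γ) : ‖fderiv ℂ f z‖ ≤ C * S :=
    (hframe z hz _).trans <| mul_le_mul_of_nonneg_left (Finset.sum_le_sum fun j _ ↦
      norm_le_iSup_of_mem_closure hUc (hfderiv.clm_apply (hZ j)) (hΓU hz)) hC.le
  intro z hz
  refine ContinuousLinearMap.opNorm_le_bound _ (by positivity) fun v ↦ ?_
  exact hnorming.norm_le hUc ((hpartial v).continuousOn.mono hUW)
    ((hpartial v).mono (subset_closure.trans hUW)) (by positivity)
    (fun w hw ↦ (fderiv ℂ f w).le_of_opNorm_le (hleΓ w hw) v) hz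

theorem shilov_estimate_general {ι : Type*} [Fintype ι] (hU : Bornology.IsBounded U)
    (hΓ : IsClosed Γ) (hΓU : Γ ⊆ closure U) (hnorming : IsNormingSet U Γ) (v : ι → E)
    (hZ : ∀ j, ContinuousOn (Z j) (closure U))
    (hspan : ∀ z ∈ Γ, Submodule.span ℂ (range fun j ↦ Z j z) = ⊤) :
    ∃ C > (0 : ℝ), ∀ W : Set E, IsOpen W → closure U ⊆ W → ∀ f : E → ℂ, DifferentiableOn ℂ f W →
      ∑ i, ⨆ z : U, ‖fderiv ℂ f z (v i)‖ ≤ C * ∑ j, ⨆ z : U, ‖fderiv ℂ f z (Z j z)‖ := by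
  obtain ⟨C, hC, hle⟩ := exists_norm_fderiv_le_mul_sum_iSup hU hΓ hΓU hnorming hZ hspan
  refine ⟨C * (∑ i, ‖v i‖ + 1), by positivity, fun W hW hUW f hf ↦ ?_⟩
  set S := ∑ j, ⨆ z : U, ‖fderiv ℂ f z (Z j z)‖
  have hS : 0 ≤ S := Finset.sum_nonneg fun _ _ ↦ Real.iSup_nonneg fun _ ↦ norm_nonneg _
  calc ∑ i, ⨆ z : U, ‖fderiv ℂ f z (v i)‖
    _ ≤ ∑ i, C * S * ‖v i‖ := Finset.sum_le_sum fun i _ ↦ Real.iSup_le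
      (fun z ↦ (fderiv ℂ f z).le_of_opNorm_le (hle W hW hUW f hf z (subset_closure z.2)) (v i))
      (by positivity)
    _ = C * (∑ i, ‖v i‖) * S := by
      rw [← Finset.mul_sum]
      ring
    _ ≤ C * (∑ i, ‖v i‖ + 1) * S := by
      gcongr
      exact le_add_of_nonneg_right zero_le_one

end Estimate

/-- The Shilov boundary estimate (Proposition `Shilov`):
Let `U ⊆ ℂⁿ` be a nonempty bounded open set and `Γ ⊆ closure U` a closed set with the
norming (Shilov) property for functions continuous on `closure U` and holomorphic on `U`.
Let `g i j` be holomorphic on an open neighborhood `V` of `closure U`, with the matrix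
`(g i j z)` invertible for every `z ∈ Γ`.  Then there is `C > 0` such that for every open
`W` with `closure U ⊆ W ⊆ V` and every `f` holomorphic on `W`,
`∑ i sup_U |∂f/∂z_i| ≤ C ∑ j sup_U |∑ i g j i ∂f/∂z_i|`. -/
theorem shilov_estimate (n : ℕ) (hn : 0 < n)
    (U : Set (Fin n → ℂ)) (hUne : U.Nonempty) (hUo : IsOpen U)
    (hUb : Bornology.IsBounded U)
    (Γ : Set (Fin n → ℂ)) (hΓc : IsClosed Γ) (hΓsub : Γ ⊆ closure U)
    (hnorming : ∀ g : (Fin n → ℂ) → ℂ, ContinuousOn g (closure U) →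
      DifferentiableOn ℂ g U →
      sSup ((fun z => ‖g z‖) '' closure U) = sSup ((fun z => ‖g z‖) '' Γ))
    (V : Set (Fin n → ℂ)) (hVo : IsOpen V) (hUV : closure U ⊆ V)
    (g : Fin n → Fin n → (Fin n → ℂ) → ℂ)
    (hg : ∀ i j, DifferentiableOn ℂ (g i j) V)
    (hginv : ∀ z ∈ Γ, (Matrix.of fun i j => g i j z).det ≠ 0) :
    ∃ C > (0 : ℝ), ∀ W : Set (Fin n → ℂ), IsOpen W → closure U ⊆ W → W ⊆ V →
      ∀ f : (Fin n → ℂ) → ℂ, DifferentiableOn ℂ f W →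
      ∑ i : Fin n, ⨆ z : U, ‖fderiv ℂ f z (Pi.single i 1)‖ ≤
        C * ∑ j : Fin n, ⨆ z : U, ‖∑ i : Fin n, g j i z * fderiv ℂ f z (Pi.single i 1)‖ := by
  obtain ⟨C, hC, hle⟩ := shilov_estimate_general hUb hΓc hΓsub hnorming (fun i ↦ Pi.single i 1)
    (Z := fun j z i ↦ g j i z)
    (fun j ↦ continuousOn_pi.2 fun i ↦ (hg j i).continuousOn.mono hUV)
    (fun z hz ↦ span_range_row_eq_top_of_det_ne_zero (hginv z hz))
  exact ⟨C, hC, fun W hW hUW _ f hf ↦ by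
    simpa only [sum_mul_apply_single_one (fderiv ℂ f _)] using hle W hW hUW f hf⟩
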